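/- Let k ≥ 2, let X = (X_1,…,X_k) follow the negative multinomial distribution NM_k(r,θ), and let g : ℕ^k → ℝ be such that E|X_j g(X)| < ∞ and E|X_j Δ_i g(X)| < ∞ for all i, j = 1,…,k. Then for every integer x_k ≥ 0, E[g(X) | X_k = x_k + 1] − E[g(X) | X_k = x_k] = E[ w_{-k|k}(X) Δ_k g(X) | X_k = x_k ] + Cov( w_{-k|k}(X), g(X) | X_k = x_k ), where w_{-k|k} is the conditional negative multinomial w-function and Δ_k g(x) := g(x+e_k) − g(x). -/

import Mathlib

/-!
Write `S_m(f) = ∑_{x_L = m} p(x) f(x)` and `N(x) = r + ∑ x_i`. Everything rests on the recursion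
`p(x + e_i) (x_i + 1) = p(x) N(x) θ_i` (`negMultPMF_shift`).

Summing it over the slice `x_L = m` for each `i ≠ L`, after the change of variables `x ↦ x + e_i`,
gives `S_m(x_i) = θ_i S_m(N)`. Adding these up over `i ≠ L` gives
`(θ_0 + θ_L) S_m(N) = (r + m) S_m(1)`, that is, `E[w | X_L = m] = 1` (`slice_mean`).
For `i = L` the same change of variables gives
`(m + 1) S_{m+1}(f) = θ_L S_m(N · f(· + e_L))` (`slice_succ`); dividing the instance `f = g` by the
instance `f = 1` yields `E[g | X_L = m + 1] = E[w · g(· + e_L) | X_L = m]`, and the right-hand side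
splits as `E[w Δ_L g] + E[w g]`, where `E[w g] = Cov(w, g) + E[g]`.

Summability of `p` comes from the multinomial theorem and `∑ C(n + r - 1, r - 1) s ^ n < ∞`
(`summable_negMultPMF`); that of `p N` follows because `p N` is a multiple of the p.m.f. with `r + 1`
in place of `r`. The weighted hypotheses control `p N |h|` because `∑ x_j ≥ 1` off the origin
(`summable_mul_of_weighted`).
-/

open scoped BigOperators

/-- The p.m.f. of the negative multinomial distribution `NM_k(r, θ)` on `ℕ^k`. -/
noncomputable def negMultPMF (k r : ℕ) (θ : Fin k → ℝ) (x : Fin k → ℕ) : ℝ :=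
  (Nat.factorial (r + ∑ i, x i - 1) : ℝ) /
      ((∏ i, (Nat.factorial (x i) : ℝ)) * (Nat.factorial (r - 1) : ℝ)) *
    (∏ i, θ i ^ x i) * (1 - ∑ i, θ i) ^ r

/-- Forward difference `Δ_i g (x) = g (x + e_i) - g x`. -/
def fd {k : ℕ} (g : (Fin k → ℕ) → ℝ) (i : Fin k) (x : Fin k → ℕ) : ℝ :=
  g (Function.update x i (x i + 1)) - g x

/-- Conditional expectation `E[f(X) | X_L = xk]` for a discrete random vector `X` on `ℕ^k`
with p.m.f. `p`. -/
noncomputable def condE (k : ℕ) (p : (Fin k → ℕ) → ℝ) (L : Fin k) (xk : ℕ)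
    (f : (Fin k → ℕ) → ℝ) : ℝ :=
  (∑' x : Fin k → ℕ, if x L = xk then p x * f x else 0) /
    (∑' x : Fin k → ℕ, if x L = xk then p x else 0)

/-- Conditional covariance `Cov(f(X), h(X) | X_L = xk)`. -/
noncomputable def condCov (k : ℕ) (p : (Fin k → ℕ) → ℝ) (L : Fin k) (xk : ℕ)
    (f h : (Fin k → ℕ) → ℝ) : ℝ :=
  condE k p L xk (fun x => f x * h x) - condE k p L xk f * condE k p L xk h

/-- The conditional negative multinomial `w`-function `w_{-k|k}`. -/
noncomputable def negCondW (k r : ℕ) (θ : Fin k → ℝ) (L : Fin k) (x : Fin k → ℕ) : ℝ :=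
  ((1 - ∑ i, θ i) + θ L) * ((r : ℝ) + ∑ i, (x i : ℝ)) / ((r : ℝ) + (x L : ℝ))

/-! ### The recursions satisfied by the p.m.f. -/

lemma negMultPMF_nonneg {k r : ℕ} {θ : Fin k → ℝ} (hθ : ∀ i, 0 < θ i)
    (hθ0 : 0 < 1 - ∑ i, θ i) (x : Fin k → ℕ) : 0 ≤ negMultPMF k r θ x := by
  unfold negMultPMF
  have : 0 ≤ ∏ i, θ i ^ x i := Finset.prod_nonneg fun i _ => pow_nonneg (hθ i).le _
  positivity

lemma negMultPMF_pos {k r : ℕ} {θ : Fin k → ℝ} (hθ : ∀ i, 0 < θ i)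
    (hθ0 : 0 < 1 - ∑ i, θ i) (x : Fin k → ℕ) : 0 < negMultPMF k r θ x := by
  unfold negMultPMF
  have : 0 < ∏ i, θ i ^ x i := Finset.prod_pos fun i _ => pow_pos (hθ i) _
  positivity

lemma negMultPMF_shift {k r : ℕ} (hr : 1 ≤ r) (θ : Fin k → ℝ) (i : Fin k) (x : Fin k → ℕ) :
    negMultPMF k r θ (Function.update x i (x i + 1)) * ((x i : ℝ) + 1)
      = negMultPMF k r θ x * ((r : ℝ) + ∑ j, (x j : ℝ)) * θ i := by
  have hsum : ∑ j, Function.update x i (x i + 1) j = ∑ j, x j + 1 := by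
    rw [Finset.sum_update_of_mem (Finset.mem_univ i),
      ← Finset.add_sum_erase _ x (Finset.mem_univ i), Finset.sdiff_singleton_eq_erase]
    ring
  have hfac : ∏ j, ((Function.update x i (x i + 1) j).factorial : ℝ)
      = ((x i : ℝ) + 1) * ∏ j, ((x j).factorial : ℝ) := by
    rw [← Finset.mul_prod_erase _ _ (Finset.mem_univ i),
      ← Finset.mul_prod_erase _ (fun j => ((x j).factorial : ℝ)) (Finset.mem_univ i),
      Finset.prod_congr rfl (g := fun j => ((x j).factorial : ℝ))]
    · simp [Nat.factorial_succ]; ring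
    · intro j hj
      rw [Function.update_of_ne (Finset.ne_of_mem_erase hj)]
  have hpow : ∏ j, θ j ^ (Function.update x i (x i + 1) j) = θ i * ∏ j, θ j ^ x j := by
    rw [← Finset.mul_prod_erase _ _ (Finset.mem_univ i),
      ← Finset.mul_prod_erase _ (fun j => θ j ^ x j) (Finset.mem_univ i),
      Finset.prod_congr rfl (g := fun j => θ j ^ x j)]
    · simp [pow_succ]; ring
    · intro j hj
      rw [Function.update_of_ne (Finset.ne_of_mem_erase hj)]
  have htop : ((r + (∑ j, x j + 1) - 1).factorial : ℝ)
      = ((r : ℝ) + ∑ j, (x j : ℝ)) * ((r + ∑ j, x j - 1).factorial : ℝ) := by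
    have h : r + (∑ j, x j + 1) - 1 = (r + ∑ j, x j - 1) + 1 := by omega
    rw [h, Nat.factorial_succ, show r + ∑ j, x j - 1 + 1 = r + ∑ j, x j by omega]
    push_cast; ring
  unfold negMultPMF
  rw [hsum, hfac, hpow, htop]
  have h1 : (x i : ℝ) + 1 ≠ 0 := by positivity
  have h2 : ∏ j, ((x j).factorial : ℝ) ≠ 0 :=
    Finset.prod_ne_zero_iff.2 fun j _ => by positivity
  field_simp

lemma negMultPMF_succ {k r : ℕ} (hr : 1 ≤ r) (θ : Fin k → ℝ) (x : Fin k → ℕ) :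
    negMultPMF k r θ x * ((r : ℝ) + ∑ j, (x j : ℝ)) * (1 - ∑ i, θ i)
      = r * negMultPMF k (r + 1) θ x := by
  obtain ⟨s, rfl⟩ : ∃ s, r = s + 1 := ⟨r - 1, by omega⟩
  unfold negMultPMF
  rw [show s + 1 + ∑ j, x j - 1 = s + ∑ j, x j by omega,
    show s + 1 + 1 + ∑ j, x j - 1 = (s + ∑ j, x j) + 1 by omega, Nat.factorial_succ,
    show s + 1 + 1 - 1 = s + 1 by omega, show s + 1 - 1 = s by omega, Nat.factorial_succ]
  have h2 : ∏ j, ((x j).factorial : ℝ) ≠ 0 :=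
    Finset.prod_ne_zero_iff.2 fun j _ => by positivity
  push_cast
  field_simp
  ring

/-! ### Summability -/

/-- By the multinomial theorem, the mass of `{x | ∑ x_i = n}` is
`C(n + r - 1, r - 1) (∑ θ_i) ^ n θ_0 ^ r`. -/
lemma sum_negMultPMF_level {k r : ℕ} (hr : 1 ≤ r) (θ : Fin k → ℝ) (n : ℕ) :
    ∑ x ∈ Finset.piAntidiag Finset.univ n, negMultPMF k r θ x
      = ((n + (r - 1)).choose (r - 1) : ℝ) * (∑ i, θ i) ^ n * (1 - ∑ i, θ i) ^ r := by
  rw [Finset.sum_pow_eq_sum_piAntidiag, Finset.mul_sum, Finset.sum_mul]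
  refine Finset.sum_congr rfl fun x hx => ?_
  have hx' : ∑ i, x i = n := (Finset.mem_piAntidiag.1 hx).1
  have h1 := Nat.multinomial_spec Finset.univ x
  have h2 := Nat.add_choose_mul_factorial_mul_factorial n (r - 1)
  rw [hx'] at h1
  have h1' : (∏ i, ((x i).factorial : ℝ)) * (Nat.multinomial Finset.univ x : ℝ) = n.factorial := by
    exact_mod_cast h1
  have h2' : ((n + (r - 1)).choose (r - 1) : ℝ) * n.factorial * (r - 1).factorial
      = (n + (r - 1)).factorial := by
    exact_mod_cast h2
  have h3 : ∏ j, ((x j).factorial : ℝ) ≠ 0 :=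
    Finset.prod_ne_zero_iff.2 fun j _ => by positivity
  unfold negMultPMF
  rw [hx', show r + n - 1 = n + (r - 1) by omega, ← h2', ← h1']
  field_simp

lemma summable_of_summable_level {k : ℕ} {p : (Fin k → ℕ) → ℝ} (hp : ∀ x, 0 ≤ p x)
    (hs : Summable fun n : ℕ => ∑ x ∈ Finset.piAntidiag Finset.univ n, p x) : Summable p := by
  refine summable_of_sum_le hp
    (c := ∑' n : ℕ, ∑ x ∈ Finset.piAntidiag Finset.univ n, p x) fun u => ?_
  have hle : ∀ t : Finset ℕ, ∑ n ∈ t, ∑ x ∈ Finset.piAntidiag Finset.univ n, p x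
      ≤ ∑' n : ℕ, ∑ x ∈ Finset.piAntidiag Finset.univ n, p x := fun t =>
    hs.sum_le_tsum t fun n _ => Finset.sum_nonneg fun x _ => hp x
  have hfib : ∑ n ∈ u.image (fun x => ∑ i, x i), ∑ x ∈ u with ∑ i, x i = n, p x = ∑ x ∈ u, p x :=
    Finset.sum_fiberwise_of_maps_to (fun x hx => Finset.mem_image_of_mem _ hx) p
  rw [← hfib]
  refine (Finset.sum_le_sum fun n _ => ?_).trans (hle _)
  refine Finset.sum_le_sum_of_subset_of_nonneg (fun x hx => ?_) fun x _ _ => hp x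
  simpa using (Finset.mem_filter.1 hx).2

lemma summable_negMultPMF {k r : ℕ} (hr : 1 ≤ r) {θ : Fin k → ℝ} (hθ : ∀ i, 0 < θ i)
    (hθ0 : 0 < 1 - ∑ i, θ i) : Summable (negMultPMF k r θ) := by
  have hs0 : 0 ≤ ∑ i, θ i := Finset.sum_nonneg fun i _ => (hθ i).le
  have hnorm : ‖∑ i, θ i‖ < 1 := by rw [Real.norm_of_nonneg hs0]; linarith
  have h := (summable_choose_mul_geometric_of_norm_lt_one (R := ℝ) (r - 1) hnorm).mul_right
    ((1 - ∑ i, θ i) ^ r)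
  refine summable_of_summable_level (negMultPMF_nonneg hθ hθ0) ?_
  simp only [sum_negMultPMF_level hr]
  exact h

lemma summable_negMultPMF_mul {k r : ℕ} (hr : 1 ≤ r) {θ : Fin k → ℝ} (hθ : ∀ i, 0 < θ i)
    (hθ0 : 0 < 1 - ∑ i, θ i) :
    Summable fun x : Fin k → ℕ => negMultPMF k r θ x * ((r : ℝ) + ∑ j, (x j : ℝ)) := by
  have h := ((summable_negMultPMF (r := r + 1) (by omega) hθ hθ0).mul_left (r : ℝ)).mul_right
    (1 - ∑ i, θ i)⁻¹
  refine h.congr fun x => ?_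
  rw [← negMultPMF_succ hr, mul_inv_cancel_right₀ hθ0.ne']

/-- Since `∑ x_j ≥ 1` off the origin, integrability of all the `x_j h` forces that of
`(r + ∑ x_j) h`. -/
lemma summable_mul_of_weighted {k r : ℕ} {θ : Fin k → ℝ} (hθ : ∀ i, 0 < θ i)
    (hθ0 : 0 < 1 - ∑ i, θ i) {h : (Fin k → ℕ) → ℝ}
    (hh : ∀ j : Fin k, Summable fun x : Fin k → ℕ => negMultPMF k r θ x * |(x j : ℝ) * h x|) :
    Summable fun x : Fin k → ℕ =>
      negMultPMF k r θ x * (((r : ℝ) + ∑ j, (x j : ℝ)) * h x) := by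
  have h1 : Summable fun x : Fin k → ℕ => ∑ j, negMultPMF k r θ x * |(x j : ℝ) * h x| :=
    summable_sum fun j _ => hh j
  have h2 : Summable fun x : Fin k → ℕ =>
      if x = 0 then negMultPMF k r θ x * ((r : ℝ) * |h x|) else 0 :=
    summable_of_ne_finset_zero (s := {0}) fun x hx => if_neg (by simpa using hx)
  refine Summable.of_norm_bounded ((h1.mul_left ((r : ℝ) + 1)).add h2) fun x => ?_
  have hp := negMultPMF_nonneg (r := r) hθ hθ0 x
  have hN : (0 : ℝ) ≤ ∑ j, (x j : ℝ) := by positivity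
  have e1 : ∑ j, negMultPMF k r θ x * |(x j : ℝ) * h x|
      = negMultPMF k r θ x * ((∑ j, (x j : ℝ)) * |h x|) := by
    rw [Finset.sum_mul, Finset.mul_sum]
    exact Finset.sum_congr rfl fun j _ => by rw [abs_mul, Nat.abs_cast]
  rw [e1, Real.norm_eq_abs, abs_mul, abs_mul, abs_of_nonneg hp,
    abs_of_nonneg (by positivity : (0 : ℝ) ≤ r + ∑ j, (x j : ℝ))]
  have hph : 0 ≤ negMultPMF k r θ x * |h x| := by positivity
  split_ifs with hx
  · subst hx
    simp
  · have h1N : (1 : ℝ) ≤ ∑ j, (x j : ℝ) := by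
      have : 1 ≤ ∑ j, x j := by
        by_contra hlt
        refine hx (funext fun j => ?_)
        have := Finset.single_le_sum (f := x) (fun i _ => Nat.zero_le _) (Finset.mem_univ j)
        simp only [Pi.zero_apply]
        omega
      exact_mod_cast this
    have hr0 : (0 : ℝ) ≤ r := Nat.cast_nonneg r
    have : (r : ℝ) + ∑ j, (x j : ℝ) ≤ (r + 1) * ∑ j, (x j : ℝ) := by nlinarith
    nlinarith [mul_le_mul_of_nonneg_right this hph]

/-! ### Sums over the slices `x_L = m` -/

lemma summable_slice {k : ℕ} {f : (Fin k → ℕ) → ℝ} (hf : Summable f) (L : Fin k) (m : ℕ) :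
    Summable fun x => if x L = m then f x else 0 := by
  refine (hf.indicator {x | x L = m}).congr fun x => ?_
  simp [Set.indicator_apply]

lemma tsum_shift {k : ℕ} (i : Fin k) {f : (Fin k → ℕ) → ℝ} (hf : ∀ x, x i = 0 → f x = 0) :
    ∑' x, f (Function.update x i (x i + 1)) = ∑' x, f x := by
  have hinj : Function.Injective fun x : Fin k → ℕ => Function.update x i (x i + 1) := by
    intro x y hxy
    funext j
    have := congrFun hxy j
    by_cases hj : j = i
    · subst hj; simpa using this
    · simpa [Function.update_of_ne hj] using this
  refine hinj.tsum_eq (f := f) fun x hx => ⟨Function.update x i (x i - 1), ?_⟩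
  have : x i ≠ 0 := fun h0 => hx (hf x h0)
  have h1 : x i - 1 + 1 = x i := by omega
  simp [h1]

/-- `S_m(x_i) = θ_i S_m(r + ∑ x_j)` for `i ≠ L`. -/
lemma slice_coord {k r : ℕ} (hr : 1 ≤ r) (θ : Fin k → ℝ) {L i : Fin k} (hi : i ≠ L) (m : ℕ) :
    (∑' x : Fin k → ℕ, if x L = m then negMultPMF k r θ x * (x i : ℝ) else 0)
      = θ i * ∑' x : Fin k → ℕ,
          if x L = m then negMultPMF k r θ x * ((r : ℝ) + ∑ j, (x j : ℝ)) else 0 := by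
  rw [← tsum_shift i (fun x hx => by simp [hx]), ← tsum_mul_left]
  refine tsum_congr fun x => ?_
  rw [Function.update_of_ne hi.symm, Function.update_self, mul_ite, mul_zero]
  push_cast
  rw [negMultPMF_shift hr, mul_comm (θ i)]

/-- The conditional mean of `w` is `1`, with denominators cleared. -/
lemma slice_mean {k r : ℕ} (hr : 1 ≤ r) {θ : Fin k → ℝ} (hθ : ∀ i, 0 < θ i)
    (hθ0 : 0 < 1 - ∑ i, θ i) (L : Fin k) (m : ℕ) :
    ((1 - ∑ i, θ i) + θ L) * (∑' x : Fin k → ℕ,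
        if x L = m then negMultPMF k r θ x * ((r : ℝ) + ∑ j, (x j : ℝ)) else 0)
      = ((r : ℝ) + m) * ∑' x : Fin k → ℕ, if x L = m then negMultPMF k r θ x else 0 := by
  have sN := summable_slice (summable_negMultPMF_mul hr hθ hθ0) L m
  have s1 := summable_slice (summable_negMultPMF hr hθ hθ0) L m
  have sc : ∀ i ∈ Finset.univ.erase L, Summable fun x : Fin k → ℕ =>
      if x L = m then negMultPMF k r θ x * (x i : ℝ) else 0 := by
    intro i _
    refine Summable.of_nonneg_of_le (fun x => ?_) (fun x => ?_) sN
    · have := negMultPMF_nonneg (r := r) hθ hθ0 x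
      split_ifs <;> positivity
    · have hp := negMultPMF_nonneg (r := r) hθ hθ0 x
      have := Finset.single_le_sum (f := fun j => (x j : ℝ)) (fun i _ => Nat.cast_nonneg _)
        (Finset.mem_univ i)
      have hr0 : (0 : ℝ) ≤ r := Nat.cast_nonneg r
      split_ifs
      · exact mul_le_mul_of_nonneg_left (by linarith) hp
      · exact le_rfl
  have key : ∑' x : Fin k → ℕ,
        (if x L = m then negMultPMF k r θ x * ((r : ℝ) + ∑ j, (x j : ℝ)) else 0)
      = ((r : ℝ) + m) * (∑' x : Fin k → ℕ, if x L = m then negMultPMF k r θ x else 0)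
        + ∑ i ∈ Finset.univ.erase L, ∑' x : Fin k → ℕ,
          if x L = m then negMultPMF k r θ x * (x i : ℝ) else 0 := by
    rw [← Summable.tsum_finsetSum sc, ← tsum_mul_left,
      ← (s1.mul_left _).tsum_add (summable_sum sc)]
    refine tsum_congr fun x => ?_
    split_ifs with hx
    · rw [← Finset.mul_sum, ← Finset.add_sum_erase _ (fun j => (x j : ℝ)) (Finset.mem_univ L), hx]
      ring
    · simp
  rw [Finset.sum_congr rfl fun i hi => slice_coord hr θ (Finset.ne_of_mem_erase hi) m,
    ← Finset.sum_mul] at key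
  have hs := Finset.add_sum_erase _ θ (Finset.mem_univ L)
  rw [← hs]
  linear_combination key

lemma slice_succ {k r : ℕ} (hr : 1 ≤ r) (θ : Fin k → ℝ) (L : Fin k) (m : ℕ)
    (f : (Fin k → ℕ) → ℝ) :
    ((m : ℝ) + 1) * (∑' x : Fin k → ℕ, if x L = m + 1 then negMultPMF k r θ x * f x else 0)
      = θ L * ∑' x : Fin k → ℕ, if x L = m then
          negMultPMF k r θ x * (((r : ℝ) + ∑ j, (x j : ℝ)) *
            f (Function.update x L (x L + 1))) else 0 := by
  rw [← tsum_shift L (fun x hx => by simp [hx]), ← tsum_mul_left, ← tsum_mul_left]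
  refine tsum_congr fun x => ?_
  rw [Function.update_self]
  by_cases hx : x L = m
  · have h := negMultPMF_shift hr θ L x
    rw [if_pos (by omega), if_pos hx]
    rw [hx] at h ⊢
    linear_combination f (Function.update x L (m + 1)) * h
  · rw [if_neg (by omega), if_neg hx]
    simp

/-! ### The identity -/

/-- For `X ~ NM_k(r, θ)` and every `x_k ≥ 0`:
`Δ_k E[g(X)|X_k = x_k] = E[w_{-k|k}(X) Δ_k g(X) | X_k = x_k] + Cov(w_{-k|k}(X), g(X) | X_k = x_k)`. -/
theorem negative_multinomial_conditional_difference_covariance_identity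
    (k r : ℕ) (hk : 2 ≤ k) (hr : 1 ≤ r) (θ : Fin k → ℝ)
    (hθ : ∀ i, 0 < θ i ∧ θ i < 1) (hθ0 : 0 < 1 - ∑ i, θ i)
    (g : (Fin k → ℕ) → ℝ)
    (hg : ∀ j : Fin k,
      Summable (fun x : Fin k → ℕ => negMultPMF k r θ x * |(x j : ℝ) * g x|))
    (hdg : ∀ i j : Fin k,
      Summable (fun x : Fin k → ℕ => negMultPMF k r θ x * |(x j : ℝ) * fd g i x|))
    (xk : ℕ) :
    let L : Fin k := ⟨k - 1, by omega⟩
    condE k (negMultPMF k r θ) L (xk + 1) g - condE k (negMultPMF k r θ) L xk g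
      = condE k (negMultPMF k r θ) L xk (fun x => negCondW k r θ L x * fd g L x)
        + condCov k (negMultPMF k r θ) L xk (negCondW k r θ L) g := by
  intro L
  have hθp : ∀ i, 0 < θ i := fun i => (hθ i).1
  have hrpos : (0 : ℝ) < r := by exact_mod_cast hr
  have hcpos : 0 < (1 - ∑ i, θ i) + θ L := add_pos hθ0 (hθp L)
  have hrm : (0 : ℝ) < (r : ℝ) + xk := by positivity
  have hD : 0 < ∑' x : Fin k → ℕ, if x L = xk then negMultPMF k r θ x else 0 := by
    refine (summable_slice (summable_negMultPMF hr hθp hθ0) L xk).tsum_pos (fun x => ?_)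
      (fun _ => xk) ?_
    · have := negMultPMF_nonneg (r := r) hθp hθ0 x
      split_ifs <;> simp [this]
    · simpa using negMultPMF_pos (r := r) hθp hθ0 fun _ => xk
  have hmean := slice_mean hr hθp hθ0 L xk
  have hS := slice_succ hr θ L xk g
  have hS1 := slice_succ hr θ L xk fun _ => 1
  simp only [mul_one] at hS1
  have sg := summable_slice (summable_mul_of_weighted hθp hθ0 hg) L xk
  have sd := summable_slice (summable_mul_of_weighted hθp hθ0 (hdg L)) L xk
  have hsplit : (∑' x : Fin k → ℕ, if x L = xk then
          negMultPMF k r θ x * (((r : ℝ) + ∑ j, (x j : ℝ)) *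
            g (Function.update x L (x L + 1))) else 0)
      = (∑' x : Fin k → ℕ, if x L = xk then
          negMultPMF k r θ x * (((r : ℝ) + ∑ j, (x j : ℝ)) * fd g L x) else 0)
        + ∑' x : Fin k → ℕ, if x L = xk then
          negMultPMF k r θ x * (((r : ℝ) + ∑ j, (x j : ℝ)) * g x) else 0 := by
    rw [← sd.tsum_add sg]
    refine tsum_congr fun x => ?_
    unfold fd
    split_ifs <;> ring
  -- On the slice, `w` is a constant multiple of `r + ∑ x_j`.
  have hw : ∀ h : (Fin k → ℕ) → ℝ,
      (∑' x : Fin k → ℕ, if x L = xk then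
          negMultPMF k r θ x * (negCondW k r θ L x * h x) else 0)
        = ((1 - ∑ i, θ i) + θ L) / ((r : ℝ) + xk) * ∑' x : Fin k → ℕ, if x L = xk then
          negMultPMF k r θ x * (((r : ℝ) + ∑ j, (x j : ℝ)) * h x) else 0 := by
    intro h
    rw [← tsum_mul_left]
    refine tsum_congr fun x => ?_
    split_ifs with hx
    · unfold negCondW
      rw [hx]
      ring
    · simp
  have hw1 := hw fun _ => 1
  simp only [mul_one] at hw1
  unfold condCov condE
  rw [hw, hw, hw1]
  rw [hsplit] at hS
  have hm1 : (0 : ℝ) < (xk : ℝ) + 1 := by positivity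
  have hθL := hθp L
  generalize (∑' x : Fin k → ℕ, if x L = xk + 1 then negMultPMF k r θ x * g x else 0) = a at *
  generalize (∑' x : Fin k → ℕ, if x L = xk + 1 then negMultPMF k r θ x else 0) = b at *
  generalize (∑' x : Fin k → ℕ, if x L = xk then negMultPMF k r θ x * g x else 0) = G at *
  generalize (∑' x : Fin k → ℕ, if x L = xk then negMultPMF k r θ x else 0) = D at *
  generalize (∑' x : Fin k → ℕ, if x L = xk then
    negMultPMF k r θ x * ((r : ℝ) + ∑ j, (x j : ℝ)) else 0) = A at *
  generalize (∑' x : Fin k → ℕ, if x L = xk then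
    negMultPMF k r θ x * (((r : ℝ) + ∑ j, (x j : ℝ)) * fd g L x) else 0) = U at *
  generalize (∑' x : Fin k → ℕ, if x L = xk then
    negMultPMF k r θ x * (((r : ℝ) + ∑ j, (x j : ℝ)) * g x) else 0) = V at *
  generalize (1 - ∑ i, θ i) + θ L = c at *
  have hA : A = (r + xk) * D / c := by rw [eq_div_iff hcpos.ne']; linarith
  have ha : a = θ L * (U + V) / (xk + 1) := by rw [eq_div_iff hm1.ne']; linarith
  have hb : b = θ L * A / (xk + 1) := by rw [eq_div_iff hm1.ne']; linarith
  rw [ha, hb, hA]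
  field_simp
  ring
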